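/- arXiv:2204.09584 — 6 statements merged into one kernel-verified Lean document; each statement's English description precedes it below -/
import Mathlib

section
/- Let C be a category and E a class of morphisms of C containing all identity morphisms. Suppose a morphism f : X ⟶ Y of C is equipped with a horizontally natural right E-lifting operation θ. Then for every e : A ⟶ B in E and all u : A ⟶ X, v : B ⟶ Y with u ≫ f = e ≫ v, the morphism θ_e(u,v) is the unique diagonal filler: every t : B ⟶ X satisfying e ≫ t = u and t ≫ f = v is equal to θ_e(u,v). -/
open CategoryTheory

universe v u

/-- If a morphism `f : X ⟶ Y` carries a horizontally natural right `E`-lifting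
operation `θ`, where `E` contains all identities, then each `θ_e(u,v)` is the *unique*
diagonal filler of the corresponding square. -/
theorem stmt0 {C : Type u} [Category.{v} C] (E : MorphismProperty C)
    (hE : ∀ A : C, E (𝟙 A))
    {X Y : C} (f : X ⟶ Y)
    (θ : ∀ ⦃A B : C⦄ (e : A ⟶ B), E e → ∀ (u : A ⟶ X) (v : B ⟶ Y), u ≫ f = e ≫ v → (B ⟶ X))
    (hθ₁ : ∀ ⦃A B : C⦄ (e : A ⟶ B) (he : E e) (u : A ⟶ X) (v : B ⟶ Y) (h : u ≫ f = e ≫ v),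
      e ≫ θ e he u v h = u)
    (hθ₂ : ∀ ⦃A B : C⦄ (e : A ⟶ B) (he : E e) (u : A ⟶ X) (v : B ⟶ Y) (h : u ≫ f = e ≫ v),
      θ e he u v h ≫ f = v)
    (hnat : ∀ ⦃A B A' B' : C⦄ (e : A ⟶ B) (he : E e) (e' : A' ⟶ B') (he' : E e')
      (r₀ : A ⟶ A') (r₁ : B ⟶ B') (_ : r₀ ≫ e' = e ≫ r₁)
      (u : A' ⟶ X) (v : B' ⟶ Y) (h : u ≫ f = e' ≫ v)
      (h' : (r₀ ≫ u) ≫ f = e ≫ (r₁ ≫ v)),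
      θ e he (r₀ ≫ u) (r₁ ≫ v) h' = r₁ ≫ θ e' he' u v h) :
    ∀ ⦃A B : C⦄ (e : A ⟶ B) (he : E e) (u : A ⟶ X) (v : B ⟶ Y) (h : u ≫ f = e ≫ v)
      (t : B ⟶ X), e ≫ t = u → t ≫ f = v → t = θ e he u v h := by
  intro A B e he u v h t hu hv
  subst hu hv
  have h1 := hnat e he (𝟙 B) (hE B) e (𝟙 B) (by simp) t (t ≫ f) (by simp) (by simp)
  have h2 := hθ₁ (𝟙 B) (hE B) t (t ≫ f) (by simp)
  rw [h2] at h1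
  simp only [Category.id_comp] at h1
  exact h1.symm
end

section
/- Let C be a category and M a class of morphisms of C containing all identity morphisms. Suppose a morphism e : A ⟶ B of C is equipped with a horizontally natural left M-lifting operation φ. Then for every m : X ⟶ Y in M and all u : A ⟶ X, v : B ⟶ Y with u ≫ m = e ≫ v, the morphism φ_m(u,v) is the unique diagonal filler: every t : B ⟶ X satisfying e ≫ t = u and t ≫ m = v is equal to φ_m(u,v). -/
open CategoryTheory

universe v u

/-- If a morphism `e : A ⟶ B` carries a horizontally natural left `M`-lifting
operation `φ`, where `M` contains all identities, then each `φ_m(u,v)` is the *unique*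
diagonal filler of the corresponding square. -/
theorem stmt1 {C : Type u} [Category.{v} C] (M : MorphismProperty C)
    (hM : ∀ X : C, M (𝟙 X))
    {A B : C} (e : A ⟶ B)
    (φ : ∀ ⦃X Y : C⦄ (m : X ⟶ Y), M m → ∀ (u : A ⟶ X) (v : B ⟶ Y), u ≫ m = e ≫ v → (B ⟶ X))
    (hφ₁ : ∀ ⦃X Y : C⦄ (m : X ⟶ Y) (hm : M m) (u : A ⟶ X) (v : B ⟶ Y) (h : u ≫ m = e ≫ v),
      e ≫ φ m hm u v h = u)
    (hφ₂ : ∀ ⦃X Y : C⦄ (m : X ⟶ Y) (hm : M m) (u : A ⟶ X) (v : B ⟶ Y) (h : u ≫ m = e ≫ v),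
      φ m hm u v h ≫ m = v)
    (hnat : ∀ ⦃X Y X' Y' : C⦄ (m : X ⟶ Y) (hm : M m) (m' : X' ⟶ Y') (hm' : M m')
      (s₀ : X ⟶ X') (s₁ : Y ⟶ Y') (_ : s₀ ≫ m' = m ≫ s₁)
      (u : A ⟶ X) (v : B ⟶ Y) (h : u ≫ m = e ≫ v)
      (h' : (u ≫ s₀) ≫ m' = e ≫ (v ≫ s₁)),
      φ m' hm' (u ≫ s₀) (v ≫ s₁) h' = φ m hm u v h ≫ s₀) :
    ∀ ⦃X Y : C⦄ (m : X ⟶ Y) (hm : M m) (u : A ⟶ X) (v : B ⟶ Y) (h : u ≫ m = e ≫ v)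
      (t : B ⟶ X), e ≫ t = u → t ≫ m = v → t = φ m hm u v h := by
  intro X Y m hm u v h t h₁ h₂
  subst h₂
  have h0 : u ≫ 𝟙 X = e ≫ t := by rw [Category.comp_id, h₁]
  have key := hnat (𝟙 X) (hM X) m hm (𝟙 X) m rfl u t h0 (by rw [Category.comp_id]; exact h)
  have h3 := hφ₂ (𝟙 X) (hM X) u t h0
  rw [h3] at key
  simp only [Category.comp_id] at key
  exact key.symm
end

section
/- Let A, B, C, D be categories. Let u : A ⥤ B be a functor admitting a left adjoint F : B ⥤ A such that the counit of the adjunction F ⊣ u is the identity natural transformation (in particular u ⋙ F = 𝟭 A), and let g : C ⥤ D be a Grothendieck fibration. Then for all functors r : A ⥤ C and s : B ⥤ D satisfying r ⋙ g = u ⋙ s, there exists a functor k : B ⥤ C with u ⋙ k = r and k ⋙ g = s. -/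
open CategoryTheory

universe v₁ v₂ v₃ v₄ u₁ u₂ u₃ u₄

/-- Given a split reflection `u : A ⥤ B` (i.e. a left adjoint `F ⊣ u` whose
counit is the identity, so in particular `u ⋙ F = 𝟭 A`) and a Grothendieck fibration
`g : C ⥤ D`, every strictly commuting square `r ⋙ g = u ⋙ s` admits a strict diagonal
filler `k : B ⥤ C`. -/
theorem stmt4 {A : Type u₁} {B : Type u₂} {C : Type u₃} {D : Type u₄}
    [Category.{v₁} A] [Category.{v₂} B] [Category.{v₃} C] [Category.{v₄} D]
    (u : A ⥤ B) (F : B ⥤ A) (adj : F ⊣ u)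
    (h : u ⋙ F = 𝟭 A) (hcounit : adj.counit = eqToHom h)
    (g : C ⥤ D) [g.IsFibered]
    (r : A ⥤ C) (s : B ⥤ D) (hsq : r ⋙ g = u ⋙ s) :
    ∃ k : B ⥤ C, u ⋙ k = r ∧ k ⋙ g = s := by
  have hobj : ∀ a, F.obj (u.obj a) = a := fun a => Functor.congr_obj h a
  have hsqo : ∀ a, g.obj (r.obj a) = s.obj (u.obj a) := fun a => Functor.congr_obj hsq a
  -- the unit at objects in the image of `u` is an identity
  have hunit : ∀ a, ∃ e : u.obj a = u.obj (F.obj (u.obj a)),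
      adj.unit.app (u.obj a) = eqToHom e := by
    intro a
    refine ⟨by rw [hobj], ?_⟩
    have t := adj.right_triangle_components a
    rw [hcounit, eqToHom_app, eqToHom_map] at t
    have t2 := congrArg (fun x => x ≫ eqToHom (show u.obj a = u.obj (F.obj (u.obj a)) by rw [hobj])) t
    simpa using t2
  have hlift : ∀ {a a' : A} (f : a ⟶ a'), g.IsHomLift (s.map (u.map f)) (r.map f) := by
    intro a a' f
    exact IsHomLift.of_fac' g _ _ (hsqo a) (hsqo a') (Functor.congr_hom hsq f)
  -- chosen cartesian lifts of the unit, normalised on the image of `u`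
  have hex : ∀ b : B, ∃ (c : C) (φ : c ⟶ r.obj (F.obj b)),
      g.IsCartesian (s.map (adj.unit.app b)) φ ∧
      ∀ a, u.obj a = b → ∃ e : c = r.obj (F.obj b), φ = eqToHom e := by
    intro b
    by_cases hb : ∃ a, u.obj a = b
    · obtain ⟨a, rfl⟩ := hb
      refine ⟨r.obj (F.obj (u.obj a)), 𝟙 _, ?_, fun _ _ => ⟨rfl, rfl⟩⟩
      obtain ⟨e, he⟩ := hunit a
      have : g.IsHomLift (s.map (adj.unit.app (u.obj a))) (𝟙 (r.obj (F.obj (u.obj a)))) := by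
        rw [he, eqToHom_map]
        exact IsHomLift.id_lift_eqToHom_codomain _ (hsqo _)
      infer_instance
    · obtain ⟨c, φ, hφ⟩ := CategoryTheory.IsPreFibered.exists_isCartesian g (hsqo (F.obj b))
        (s.map (adj.unit.app b))
      exact ⟨c, φ, hφ, fun a ha => (hb ⟨a, ha⟩).elim⟩
  choose K φ hφ hφu using hex
  have hmap : ∀ {b b' : B} (f : b ⟶ b'), ∃ χ : K b ⟶ K b',
      g.IsHomLift (s.map f) χ ∧ χ ≫ φ b' = φ b ≫ r.map (F.map f) := by
    intro b b' f
    have := hφ b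
    have := hφ b'
    have := hlift (F.map f)
    have e : s.map (adj.unit.app b) ≫ s.map (u.map (F.map f)) =
        s.map f ≫ s.map (adj.unit.app b') := by
      rw [← s.map_comp, ← s.map_comp]
      congr 1
      exact (adj.unit.naturality f).symm
    exact (Functor.IsStronglyCartesian.universal_property g (s.map (adj.unit.app b')) (φ b')
      (s.map f) _ e (φ b ≫ r.map (F.map f))).exists
  choose M hM hMφ using @hmap
  have huniq : ∀ {b b' : B} (f : b ⟶ b') (χ χ' : K b ⟶ K b'), g.IsHomLift (s.map f) χ →
      g.IsHomLift (s.map f) χ' → χ ≫ φ b' = χ' ≫ φ b' → χ = χ' := by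
    intro b b' f χ χ' h1 h2 h3
    have := hφ b'
    exact Functor.IsStronglyCartesian.ext g (s.map (adj.unit.app b')) (φ b') (s.map f) h3
  have hKg : ∀ b, g.obj (K b) = s.obj b := fun b => by
    have := hφ b
    exact IsHomLift.domain_eq g (s.map (adj.unit.app b)) (φ b)
  let k : B ⥤ C :=
    { obj := K
      map := fun f => M f
      map_id := fun b => by
        apply huniq (𝟙 b) _ _ (hM _)
        · rw [s.map_id]
          exact IsHomLift.id (hKg b)
        · rw [hMφ]; simp
      map_comp := fun {a b c} f f' => by
        apply huniq (f ≫ f') _ _ (hM _)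
        · rw [s.map_comp]
          have := hM f
          have := hM f'
          infer_instance
        · rw [hMφ, Category.assoc, hMφ, ← Category.assoc, hMφ]; simp }
  refine ⟨k, ?_, ?_⟩
  · have ho : ∀ a, K (u.obj a) = r.obj a := fun a => by
      obtain ⟨e, -⟩ := hφu (u.obj a) a rfl
      rw [e, hobj]
    refine CategoryTheory.Functor.ext ho ?_
    intro a a' f
    change M (u.map f) = eqToHom (ho a) ≫ r.map f ≫ eqToHom (ho a').symm
    have := hlift f
    apply huniq (u.map f) _ _ (hM _)
    · infer_instance
    · rw [hMφ]
      obtain ⟨e, he⟩ := hφu (u.obj a) a rfl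
      obtain ⟨e', he'⟩ := hφu (u.obj a') a' rfl
      have hF : F.map (u.map f) = _ := Functor.congr_hom h f
      rw [he, he', hF]
      simp [eqToHom_map]
  · refine CategoryTheory.Functor.ext hKg ?_
    intro b b' f
    have := hM f
    exact IsHomLift.fac' g (s.map f) (M f)
end

section
/- Let C be a category, J a category, U : J ⥤ Arrow C a functor, and V : RLP(J,U) ⥤ Arrow C the forgetful functor. Then V creates coequalizers of V-split pairs: for every parallel pair g, h : X ⇉ Y in RLP(J,U) such that the pair V.map g, V.map h admits a split coequalizer in Arrow C, V creates the coequalizer of g and h. -/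
open CategoryTheory CategoryTheory.Limits

universe w₂ w₁ v₂ v₁ u₂ u₁

variable {C : Type u₁} [Category.{v₁} C] {J : Type u₂} [Category.{v₂} J]

/-- A (horizontally natural) right lifting structure on an arrow `f` of `C`, against the
diagram of arrows `U : J ⥤ Arrow C`. -/
structure LiftingOps (U : J ⥤ Arrow C) (f : Arrow C) where
  /-- the chosen diagonal fillers -/
  lift : ∀ (j : J) (sq : U.obj j ⟶ f), (U.obj j).right ⟶ f.left
  fac_left : ∀ (j : J) (sq : U.obj j ⟶ f), (U.obj j).hom ≫ lift j sq = sq.left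
  fac_right : ∀ (j : J) (sq : U.obj j ⟶ f), lift j sq ≫ f.hom = sq.right
  natural : ∀ {i j : J} (r : i ⟶ j) (sq : U.obj j ⟶ f),
    lift i (U.map r ≫ sq) = (U.map r).right ≫ lift j sq

/-- The category `RLP(J,U)` of arrows of `C` equipped with a right lifting structure
against `U : J ⥤ Arrow C`. -/
structure RLP (U : J ⥤ Arrow C) where
  /-- the underlying arrow -/
  arr : Arrow C
  /-- the lifting structure -/
  str : LiftingOps U arr

instance {U : J ⥤ Arrow C} : Category (RLP U) where
  Hom X Y := { t : X.arr ⟶ Y.arr //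
    ∀ (j : J) (sq : U.obj j ⟶ X.arr), X.str.lift j sq ≫ t.left = Y.str.lift j (sq ≫ t) }
  id X := ⟨𝟙 X.arr, by intro j sq; simp⟩
  comp {X Y Z} g h := ⟨g.1 ≫ h.1, by
    intro j sq
    calc X.str.lift j sq ≫ (g.1 ≫ h.1).left
        = (X.str.lift j sq ≫ g.1.left) ≫ h.1.left := by simp
      _ = Y.str.lift j (sq ≫ g.1) ≫ h.1.left := by rw [g.2 j sq]
      _ = Z.str.lift j ((sq ≫ g.1) ≫ h.1) := h.2 j (sq ≫ g.1)
      _ = Z.str.lift j (sq ≫ (g.1 ≫ h.1)) := by rw [Category.assoc]⟩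
  id_comp g := Subtype.ext (Category.id_comp g.1)
  comp_id g := Subtype.ext (Category.comp_id g.1)
  assoc f g h := Subtype.ext (Category.assoc f.1 g.1 h.1)

/-- The forgetful functor `V : RLP(J,U) ⥤ Arrow C`. -/
def forgetRLP (U : J ⥤ Arrow C) : RLP U ⥤ Arrow C where
  obj X := X.arr
  map t := t.1

instance forgetRLP_reflectsIso (U : J ⥤ Arrow C) : (forgetRLP U).ReflectsIsomorphisms where
  reflects {A B} f hf := by
    have hf' : IsIso f.1 := hf
    have hl : f.1.left ≫ (inv f.1).left = 𝟙 _ := by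
      rw [← Arrow.comp_left, IsIso.hom_inv_id]; rfl
    refine ⟨⟨⟨inv f.1, fun j sq => ?_⟩, Subtype.ext (IsIso.hom_inv_id f.1),
      Subtype.ext (IsIso.inv_hom_id f.1)⟩⟩
    have h1 := f.2 j (sq ≫ inv f.1)
    rw [Category.assoc, IsIso.inv_hom_id, Category.comp_id] at h1
    rw [← h1, Category.assoc, hl, Category.comp_id]

/-- Lifting structure on the split coequalizer. -/
def splitObj {U : J ⥤ Arrow C} {X Y : RLP U} {g h : X ⟶ Y} {Z : Arrow C} {π : Y.arr ⟶ Z}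
    (q : IsSplitCoequalizer (X := X.arr) g.1 h.1 π) : RLP U where
  arr := Z
  str :=
    { lift := fun j sq => Y.str.lift j (sq ≫ q.rightSection) ≫ π.left
      fac_left := fun j sq => by
        rw [← Category.assoc, Y.str.fac_left, ← Arrow.comp_left, Category.assoc,
          q.rightSection_π, Category.comp_id]
      fac_right := fun j sq => by
        rw [Category.assoc, Arrow.w π, ← Category.assoc, Y.str.fac_right, ← Arrow.comp_right,
          Category.assoc, q.rightSection_π, Category.comp_id]
      natural := fun r sq => by
        rw [Category.assoc, Y.str.natural, Category.assoc] }

theorem split_key {U : J ⥤ Arrow C} {X Y : RLP U} {g h : X ⟶ Y} {Z : Arrow C} {π : Y.arr ⟶ Z}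
    (q : IsSplitCoequalizer (X := X.arr) g.1 h.1 π) (j : J) (sq : U.obj j ⟶ Y.arr) :
    Y.str.lift j sq ≫ π.left = Y.str.lift j ((sq ≫ π) ≫ q.rightSection) ≫ π.left := by
  have hg := g.2 j (sq ≫ q.leftSection)
  have hh := h.2 j (sq ≫ q.leftSection)
  rw [Category.assoc, q.leftSection_top] at hg
  rw [Category.assoc, q.leftSection_bottom, Category.comp_id] at hh
  rw [Category.assoc, ← hg, ← hh, Category.assoc, Category.assoc, ← Arrow.comp_left,
    ← Arrow.comp_left, q.condition]

/-- The lifted coequalizer map. -/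
def splitπ {U : J ⥤ Arrow C} {X Y : RLP U} {g h : X ⟶ Y} {Z : Arrow C} {π : Y.arr ⟶ Z}
    (q : IsSplitCoequalizer (X := X.arr) g.1 h.1 π) : Y ⟶ splitObj q :=
  ⟨π, split_key q⟩

theorem splitπ_condition {U : J ⥤ Arrow C} {X Y : RLP U} {g h : X ⟶ Y} {Z : Arrow C}
    {π : Y.arr ⟶ Z} (q : IsSplitCoequalizer (X := X.arr) g.1 h.1 π) :
    g ≫ splitπ q = h ≫ splitπ q := Subtype.ext q.condition

/-- The lifted cofork is a coequalizer. -/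
def splitIsColimit {U : J ⥤ Arrow C} {X Y : RLP U} {g h : X ⟶ Y} {Z : Arrow C}
    {π : Y.arr ⟶ Z} (q : IsSplitCoequalizer (X := X.arr) g.1 h.1 π) :
    IsColimit (Cofork.ofπ (splitπ q) (splitπ_condition q)) :=
  Cofork.IsColimit.mk' _ fun s => by
    have hc : g.1 ≫ s.π.1 = h.1 ≫ s.π.1 := congrArg Subtype.val s.condition
    have hk : π ≫ q.rightSection ≫ s.π.1 = s.π.1 := by
      rw [← q.leftSection_top_assoc, hc, q.leftSection_bottom_assoc]
    refine ⟨⟨q.rightSection ≫ s.π.1, fun j sq => ?_⟩, Subtype.ext hk, fun {m} hm => ?_⟩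
    · have hkey : ∀ sq' : U.obj j ⟶ Z,
          (Y.str.lift j (sq' ≫ q.rightSection) ≫ π.left) ≫ (q.rightSection ≫ s.π.1).left =
            s.pt.str.lift j (sq' ≫ q.rightSection ≫ s.π.1) := fun sq' => by
        rw [Category.assoc, ← Arrow.comp_left, hk]
        exact (s.π.2 j _).trans (congrArg _ (Category.assoc _ _ _))
      exact hkey sq
    · have hm' : π ≫ m.1 = s.π.1 := congrArg Subtype.val hm
      apply Subtype.ext
      change m.1 = q.rightSection ≫ s.π.1
      rw [← hm']
      exact (q.rightSection_π_assoc m.1).symm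

/-- The forgetful functor `V : RLP(J,U) ⥤ Arrow C` creates coequalizers of
`V`-split pairs. -/
theorem stmt9 (U : J ⥤ Arrow C) {X Y : RLP U} (g h : X ⟶ Y)
    [(forgetRLP U).IsSplitPair g h] :
    Nonempty (CreatesColimit (parallelPair g h) (forgetRLP U)) := by
  obtain ⟨Z, π, ⟨q⟩⟩ := HasSplitCoequalizer.splittable
    (f := (forgetRLP U).map g) (g := (forgetRLP U).map h)
  have q' : IsSplitCoequalizer (X := X.arr) (Y := Y.arr) g.1 h.1 π := q
  refine ⟨createsColimitOfReflectsIso fun c t => ?_⟩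
  have hm : IsColimit ((forgetRLP U).mapCocone
      (Cofork.ofπ (splitπ q') (splitπ_condition q'))) :=
    (isColimitMapCoconeCoforkEquiv (forgetRLP U) (splitπ_condition q')).symm q'.isCoequalizer
  exact
    { liftedCocone := Cofork.ofπ (splitπ q') (splitπ_condition q')
      validLift := hm.uniqueUpToIso t
      makesColimit := splitIsColimit q' }
end

section
/- Let C be a category, J a category, U : J ⥤ Arrow C a functor, and V : RLP(J,U) ⥤ Arrow C the forgetful functor. If V admits a left adjoint, then V is monadic (in the sense of Mathlib's MonadicRightAdjoint). -/
open CategoryTheory CategoryTheory.Limits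

universe w₂ w₁ v₂ v₁ u₂ u₁

variable {C : Type u₁} [Category.{v₁} C] {J : Type u₂} [Category.{v₂} J]

namespace RLP

variable {U : J ⥤ Arrow C}

/-- Extensionality of morphisms. -/
theorem hom_ext' {X Y : RLP U} {s t : X ⟶ Y} (h : s.1 = t.1) : s = t := Subtype.ext h

variable {A B : RLP U} {f g : A ⟶ B} {Q : Arrow C} {p : B.arr ⟶ Q}

/-- The lifting structure on a split coequalizer. -/
def quot (h : IsSplitCoequalizer f.1 g.1 p) : RLP U where
  arr := Q
  str :=
    { lift := fun j sq => B.str.lift j (sq ≫ h.rightSection) ≫ p.left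
      fac_left := by
        intro j sq
        have h1 : h.rightSection.left ≫ p.left = 𝟙 _ :=
          congrArg (fun t => t.left) h.rightSection_π
        rw [← Category.assoc, B.str.fac_left]
        change (sq.left ≫ h.rightSection.left) ≫ p.left = _
        rw [Category.assoc, h1, Category.comp_id]
      fac_right := by
        intro j sq
        have h1 : h.rightSection.right ≫ p.right = 𝟙 _ :=
          congrArg (fun t => t.right) h.rightSection_π
        have h2 : p.left ≫ Q.hom = B.arr.hom ≫ p.right := Arrow.w p
        rw [Category.assoc, h2, ← Category.assoc, B.str.fac_right]
        change (sq.right ≫ h.rightSection.right) ≫ p.right = _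
        rw [Category.assoc, h1, Category.comp_id]
      natural := by
        intro i j r sq
        rw [← Category.assoc, ← B.str.natural, Category.assoc] }

theorem quotMap_aux (h : IsSplitCoequalizer f.1 g.1 p) (j : J) (sq : U.obj j ⟶ B.arr) :
    B.str.lift j sq ≫ p.left = B.str.lift j ((sq ≫ p) ≫ h.rightSection) ≫ p.left := by
  have e3 : f.1.left ≫ p.left = g.1.left ≫ p.left := congrArg (fun t => t.left) h.condition
  have e4 : (sq ≫ p) ≫ h.rightSection = (sq ≫ h.leftSection) ≫ f.1 := by
    rw [Category.assoc, Category.assoc, h.leftSection_top]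
  have e5 : (sq ≫ h.leftSection) ≫ g.1 = sq := by
    rw [Category.assoc, h.leftSection_bottom, Category.comp_id]
  rw [e4, ← f.2, Category.assoc, e3, ← Category.assoc, g.2, e5]

/-- The quotient map. -/
def quotMap (h : IsSplitCoequalizer f.1 g.1 p) : B ⟶ quot h :=
  ⟨p, quotMap_aux h⟩

theorem quot_condition (h : IsSplitCoequalizer f.1 g.1 p) :
    f ≫ quotMap h = g ≫ quotMap h :=
  hom_ext' h.condition

theorem quot_fac (h : IsSplitCoequalizer f.1 g.1 p)
    {Z : RLP U} (k : B ⟶ Z) (hk : f ≫ k = g ≫ k) : p ≫ h.rightSection ≫ k.1 = k.1 := by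
  have e1 : h.leftSection ≫ g.1 = 𝟙 _ := h.leftSection_bottom
  have e2 : h.leftSection ≫ f.1 = p ≫ h.rightSection := h.leftSection_top
  have e3 : f.1 ≫ k.1 = g.1 ≫ k.1 := congrArg Subtype.val hk
  rw [← Category.assoc, ← e2, Category.assoc, e3, ← Category.assoc, e1, Category.id_comp]

theorem quotDesc_aux (h : IsSplitCoequalizer f.1 g.1 p)
    {Z : RLP U} (k : B ⟶ Z) (hk : f ≫ k = g ≫ k) (j : J) (sq : U.obj j ⟶ Q) :
    (B.str.lift j (sq ≫ h.rightSection) ≫ p.left) ≫ (h.rightSection ≫ k.1).left =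
      Z.str.lift j (sq ≫ h.rightSection ≫ k.1) := by
  have e : p.left ≫ (h.rightSection ≫ k.1).left = k.1.left :=
    congrArg (fun t => t.left) (quot_fac h k hk)
  rw [Category.assoc, e, k.2, Category.assoc]

/-- The induced map out of the quotient. -/
def quotDesc (h : IsSplitCoequalizer f.1 g.1 p)
    {Z : RLP U} (k : B ⟶ Z) (hk : f ≫ k = g ≫ k) : quot h ⟶ Z :=
  ⟨h.rightSection ≫ k.1, quotDesc_aux h k hk⟩

theorem quot_uniq (h : IsSplitCoequalizer f.1 g.1 p) {Z : Arrow C} (m : Q ⟶ Z)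
    (k : B.arr ⟶ Z) (e : p ≫ m = k) : m = h.rightSection ≫ k := by
  rw [← e, ← Category.assoc, h.rightSection_π, Category.id_comp]

/-- The quotient is a coequalizer. -/
def quotIsColimit (h : IsSplitCoequalizer f.1 g.1 p) :
    IsColimit (Cofork.ofπ (quotMap h) (quot_condition h)) :=
  Cofork.IsColimit.mk _ (fun s => quotDesc h s.π s.condition)
    (fun s => hom_ext' (quot_fac h s.π s.condition))
    (fun s m hm => hom_ext' (quot_uniq h m.1 s.π.1 (congrArg Subtype.val hm)))

instance : (forgetRLP U).ReflectsIsomorphisms where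
  reflects {X Y} t ht := by
    obtain ⟨i, h1, h2⟩ := ht
    change Y.arr ⟶ X.arr at i
    change t.1 ≫ i = 𝟙 X.arr at h1
    change i ≫ t.1 = 𝟙 Y.arr at h2
    refine ⟨⟨i, ?_⟩, hom_ext' h1, hom_ext' h2⟩
    intro j sq
    have e : sq = (sq ≫ i) ≫ t.1 := by rw [Category.assoc, h2, Category.comp_id]
    have e1 : t.1.left ≫ i.left = 𝟙 _ := congrArg (fun t => t.left) h1
    conv_lhs => rw [e]
    rw [← t.2, Category.assoc, e1, Category.comp_id]

end RLP

/-- If the forgetful functor `V : RLP(J,U) ⥤ Arrow C` admits a left adjoint,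
then it is monadic. -/
theorem stmt10 (U : J ⥤ Arrow C) (F : Arrow C ⥤ RLP U) (adj : F ⊣ forgetRLP U) :
    Nonempty (MonadicRightAdjoint (forgetRLP U)) := by
  have h1 : Monad.HasCoequalizerOfIsSplitPair (forgetRLP U) := ⟨fun f g hs => by
    obtain ⟨Z, p, ⟨h⟩⟩ := hs.splittable
    change IsSplitCoequalizer f.1 g.1 p at h
    exact ⟨⟨_, RLP.quotIsColimit h⟩⟩⟩
  have h2 : Monad.PreservesColimitOfIsSplitPair (forgetRLP U) := ⟨fun f g hs => by
    obtain ⟨Z, p, ⟨h⟩⟩ := hs.splittable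
    change IsSplitCoequalizer f.1 g.1 p at h
    exact preservesColimit_of_preserves_colimit_cocone (RLP.quotIsColimit h)
      ((isColimitMapCoconeCoforkEquiv (forgetRLP U) (RLP.quot_condition h)).symm
        h.isCoequalizer)⟩
  exact ⟨Monad.monadicOfHasPreservesGSplitCoequalizersOfReflectsIsomorphisms adj⟩
end

section
/- Let C be a locally presentable category, J a small category, and U : J ⥤ Arrow C a functor. Then the forgetful functor V : RLP(J,U) ⥤ Arrow C admits a left adjoint (and is therefore monadic). -/
open CategoryTheory CategoryTheory.Limits

universe w₂ w₁ v₂ v₁ u₂ u₁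

variable {C : Type u₁} [Category.{v₁} C] {J : Type u₂} [Category.{v₂} J]

/-- A small category `I` is `κ`-filtered if every diagram in `I` indexed by a small category
with fewer than `κ` morphisms admits a cocone. -/
def IsCardinalFilteredCat (I : Cat.{v₁, v₁}) (κ : Cardinal.{v₁}) : Prop :=
  ∀ K : Cat.{v₁, v₁}, Cardinal.mk (Σ (a : K) (b : K), a ⟶ b) < κ →
    ∀ F : K ⥤ I, Nonempty (Cocone F)

/-- An object `X` of `C` is `κ`-presentable if its covariant hom functor preserves colimits
of shape `I` for every `κ`-filtered small category `I`. -/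
def IsPresentableObj {C : Type u₁} [Category.{v₁} C] (κ : Cardinal.{v₁}) (X : C) : Prop :=
  ∀ I : Cat.{v₁, v₁}, IsCardinalFilteredCat I κ →
    Nonempty (PreservesColimitsOfShape I (coyoneda.obj (Opposite.op X)))

/-- A category is locally presentable if it is cocomplete and accessible: there is a regular
cardinal `κ` and a set-indexed family of `κ`-presentable objects such that every object is a
`κ`-filtered colimit of objects of the family. -/
def LocallyPresentable (C : Type u₁) [Category.{v₁} C] : Prop :=
  HasColimits C ∧
  ∃ κ : Cardinal.{v₁}, κ.IsRegular ∧
    ∃ (ι : Type v₁) (G : ι → C),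
      (∀ s : ι, IsPresentableObj κ (G s)) ∧
      ∀ X : C, ∃ (I : Cat.{v₁, v₁}) (F : I ⥤ C),
        IsCardinalFilteredCat I κ ∧
        (∀ i : I, ∃ s : ι, Nonempty (F.obj i ≅ G s)) ∧
        ∃ t : Cocone F, Nonempty (IsColimit t) ∧ Nonempty (t.pt ≅ X)


namespace RLPAux

section Monadic

variable {D : Type u₁} [Category.{v₁} D] {K : Type u₂} [Category.{v₂} K] {U : K ⥤ Arrow D}

instance : (forgetRLP U).ReflectsIsomorphisms where
  reflects {X Y} f hf := by
    have hf' : IsIso f.1 := hf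
    refine ⟨⟨⟨inv f.1, ?_⟩, Subtype.ext (IsIso.hom_inv_id f.1),
      Subtype.ext (IsIso.inv_hom_id f.1)⟩⟩
    intro j sq
    have h := f.2 j (sq ≫ inv f.1)
    rw [Category.assoc, IsIso.inv_hom_id, Category.comp_id] at h
    rw [← h, Category.assoc, ← Arrow.comp_left, IsIso.hom_inv_id]
    simp

/-- The lifting structure on a split quotient. -/
def splitOps {X Y : RLP U} (f g : X ⟶ Y) {Z : Arrow D} {π : Y.arr ⟶ Z}
    (s : IsSplitCoequalizer f.1 g.1 π) : RLP U where
  arr := Z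
  str :=
    { lift := fun j sq => Y.str.lift j (sq ≫ s.rightSection) ≫ π.left
      fac_left := fun j sq => by
        have h := Y.str.fac_left j (sq ≫ s.rightSection)
        rw [← Category.assoc, h, ← Arrow.comp_left, Category.assoc, s.rightSection_π,
          Category.comp_id]
      fac_right := fun j sq => by
        have h := Y.str.fac_right j (sq ≫ s.rightSection)
        rw [Category.assoc, Arrow.w π, ← Category.assoc, h, ← Arrow.comp_right, Category.assoc,
          s.rightSection_π, Category.comp_id]
      natural := fun r sq => by
        rw [Category.assoc, Y.str.natural, Category.assoc] }

/-- The projection to the split quotient. -/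
def splitπ {X Y : RLP U} (f g : X ⟶ Y) {Z : Arrow D} {π : Y.arr ⟶ Z}
    (s : IsSplitCoequalizer f.1 g.1 π) : Y ⟶ splitOps f g s :=
  ⟨π, fun j (sq : U.obj j ⟶ Y.arr) => by
    have h1 := f.2 j (sq ≫ s.leftSection)
    have h2 := g.2 j (sq ≫ s.leftSection)
    rw [Category.assoc, s.leftSection_top] at h1
    rw [Category.assoc, s.leftSection_bottom, Category.comp_id] at h2
    have h3 : Y.str.lift j sq ≫ π.left =
        Y.str.lift j ((sq ≫ π) ≫ s.rightSection) ≫ π.left := by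
      rw [Category.assoc, ← h1, ← h2, Category.assoc, Category.assoc, ← Arrow.comp_left,
        ← Arrow.comp_left, s.condition]
    exact h3⟩

lemma splitπ_condition {X Y : RLP U} (f g : X ⟶ Y) {Z : Arrow D} {π : Y.arr ⟶ Z}
    (s : IsSplitCoequalizer f.1 g.1 π) : f ≫ splitπ f g s = g ≫ splitπ f g s :=
  Subtype.ext s.condition

/-- The split quotient is a coequalizer. -/
noncomputable def splitIsColimit {X Y : RLP U} (f g : X ⟶ Y) {Z : Arrow D} {π : Y.arr ⟶ Z}
    (s : IsSplitCoequalizer f.1 g.1 π) :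
    IsColimit (Cofork.ofπ (splitπ f g s) (splitπ_condition f g s)) :=
  Cofork.IsColimit.mk' _ fun t => by
    have hk : π ≫ s.rightSection ≫ t.π.1 = t.π.1 := by
      have hc : f.1 ≫ t.π.1 = g.1 ≫ t.π.1 := congrArg Subtype.val t.condition
      rw [← Category.assoc, ← s.leftSection_top, Category.assoc, hc, ← Category.assoc,
        s.leftSection_bottom, Category.id_comp]
    refine ⟨⟨s.rightSection ≫ t.π.1, ?_⟩, Subtype.ext hk, ?_⟩
    · intro j (sq : U.obj j ⟶ Z)
      have h3 : (Y.str.lift j (sq ≫ s.rightSection) ≫ π.left) ≫ (s.rightSection ≫ t.π.1).left =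
          t.pt.str.lift j (sq ≫ s.rightSection ≫ t.π.1) := by
        rw [Category.assoc, ← Arrow.comp_left, hk, ← Category.assoc]
        exact t.π.2 j _
      exact h3
    · intro m hm
      have hm' : ∀ m' : Z ⟶ t.pt.arr, π ≫ m' = t.π.1 → m' = s.rightSection ≫ t.π.1 := by
        intro m' h
        rw [← h, ← Category.assoc, s.rightSection_π, Category.id_comp]
      exact Subtype.ext (hm' m.1 (congrArg Subtype.val hm))

lemma nonempty_monadic {F : Arrow D ⥤ RLP U} (adj : F ⊣ forgetRLP U) :
    Nonempty (MonadicRightAdjoint (forgetRLP U)) := by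
  have h1 : Monad.HasCoequalizerOfIsSplitPair (forgetRLP U) := ⟨fun {A B} f g hs => by
    obtain ⟨Z, π, ⟨s⟩⟩ := hs.splittable
    exact ⟨⟨_, splitIsColimit f g s⟩⟩⟩
  have h2 : Monad.PreservesColimitOfIsSplitPair (forgetRLP U) := ⟨fun {A B} f g hs => by
    obtain ⟨Z, π, ⟨s⟩⟩ := hs.splittable
    refine preservesColimit_of_preserves_colimit_cocone (splitIsColimit f g s) ?_
    exact (isColimitMapCoconeCoforkEquiv (forgetRLP U) (splitπ_condition f g s)).symm
      s.isCoequalizer⟩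
  exact ⟨Monad.monadicOfHasPreservesGSplitCoequalizersOfReflectsIsomorphisms adj⟩

end Monadic

section Presentable

variable {D : Type u₁} [Category.{v₁} D]

lemma isCardinalFilteredCat_of (I : Type v₁) [SmallCategory I] (κ : Cardinal.{v₁})
    [Fact κ.IsRegular] [IsCardinalFiltered I κ] : IsCardinalFilteredCat (Cat.of I) κ := by
  intro K hK F
  have inst : IsCardinalFiltered (Cat.of I) κ := ‹IsCardinalFiltered I κ›
  refine inst.nonempty_cocone F ?_
  rw [hasCardinalLT_iff_cardinal_mk_lt]
  refine lt_of_le_of_lt ?_ hK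
  refine Cardinal.mk_le_of_injective (f := fun a : Arrow K => ⟨a.left, a.right, a.hom⟩) ?_
  rintro ⟨a, b, f⟩ ⟨a', b', f'⟩ h
  simp only [Sigma.mk.injEq] at h
  obtain ⟨rfl, h⟩ := h
  simp only [heq_eq_eq, Sigma.mk.injEq] at h
  obtain ⟨rfl, h⟩ := h
  cases h
  rfl

lemma isCardinalPresentable_of {κ : Cardinal.{v₁}} [Fact κ.IsRegular] {X : D}
    (h : IsPresentableObj κ X) : IsCardinalPresentable X κ where
  preservesColimitOfShape I _ _ := (h (Cat.of I) (isCardinalFilteredCat_of I κ)).some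

lemma exists_presentable (hD : LocallyPresentable D) (X : D) :
    ∃ (κ : Cardinal.{v₁}) (_ : Fact κ.IsRegular), IsCardinalPresentable X κ := by
  obtain ⟨_, κ, hκ, ι, G, hG, hX⟩ := hD
  obtain ⟨I, F, -, hF, t, ⟨ht⟩, ⟨e⟩⟩ := hX X
  have : Fact κ.IsRegular := ⟨hκ⟩
  obtain ⟨κ', hκ', h'⟩ := HasCardinalLT.exists_regular_cardinal_forall.{v₁}
    (fun b : Bool => if b then κ.ord.ToType else Arrow I) 
  have : Fact κ'.IsRegular := ⟨hκ'⟩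
  refine ⟨κ', this, ?_⟩
  have h1 : κ ≤ κ' := by
    have := h' true
    rw [hasCardinalLT_iff_cardinal_mk_lt] at this
    simpa using this.le
  have h2 : HasCardinalLT (Arrow I) κ' := h' false
  have (i : I) : IsCardinalPresentable (F.obj i) κ' := by
    obtain ⟨s, ⟨e⟩⟩ := hF i
    have := isCardinalPresentable_of (hG s)
    have := isCardinalPresentable_of_le (G s) h1
    exact isCardinalPresentable_of_iso e.symm κ'
  have := isCardinalPresentable_of_isColimit t ht κ' h2
  exact isCardinalPresentable_of_iso e κ'

lemma exists_presentable_family (hD : LocallyPresentable D) {S : Type v₁} (X : S → D) :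
    ∃ (κ : Cardinal.{v₁}) (_ : Fact κ.IsRegular), ∀ s, IsCardinalPresentable (X s) κ := by
  choose κ h1 h2 using fun s => exists_presentable hD (X s)
  obtain ⟨κ', hκ', h'⟩ := HasCardinalLT.exists_regular_cardinal_forall.{v₁}
    (fun s => (κ s).ord.ToType)
  have : Fact κ'.IsRegular := ⟨hκ'⟩
  refine ⟨κ', this, fun s => ?_⟩
  have h3 : κ s ≤ κ' := by
    have := h' s
    rw [hasCardinalLT_iff_cardinal_mk_lt] at this
    simpa using this.le
  exact isCardinalPresentable_of_le (X s) h3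

open Opposite in
lemma isCardinalPresentable_arrow [HasColimits D] (f : Arrow D) (κ : Cardinal.{v₁})
    [Fact κ.IsRegular] [IsCardinalPresentable f.left κ] [IsCardinalPresentable f.right κ] :
    IsCardinalPresentable f κ := by
  have hl : (Arrow.leftFunc : Arrow D ⥤ D).IsCardinalAccessible κ :=
    { preservesColimitOfShape := fun J _ _ => inferInstance }
  have hr : (Arrow.rightFunc : Arrow D ⥤ D).IsCardinalAccessible κ :=
    { preservesColimitOfShape := fun J _ _ => inferInstance }
  let F₁ : Arrow D ⥤ Type v₁ := Arrow.leftFunc ⋙ coyoneda.obj (op f.left)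
  let F₂ : Arrow D ⥤ Type v₁ := Arrow.rightFunc ⋙ coyoneda.obj (op f.right)
  let F₃ : Arrow D ⥤ Type v₁ := Arrow.rightFunc ⋙ coyoneda.obj (op f.left)
  let a₁ : coyoneda.obj (op f) ⟶ F₁ := { app := fun g => ↾fun t => t.left }
  let a₂ : coyoneda.obj (op f) ⟶ F₂ := { app := fun g => ↾fun t => t.right }
  let b₁ : F₁ ⟶ F₃ :=
    { app := fun g => ↾fun t => t ≫ g.hom
      naturality := fun g g' u => by
        ext t
        have h : ∀ t : f.left ⟶ g.left, (t ≫ u.left) ≫ g'.hom = (t ≫ g.hom) ≫ u.right := by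
          intro t
          rw [Category.assoc, Category.assoc, Arrow.w u]
        exact h t }
  let b₂ : F₂ ⟶ F₃ := { app := fun g => ↾fun t => f.hom ≫ t }
  have hp : IsPullback a₁ a₂ b₁ b₂ := by
    refine IsPullback.of_forall_isPullback_app fun g => ?_
    rw [Types.isPullback_iff]
    refine ⟨?_, ?_, ?_⟩
    · ext t
      exact Arrow.w t
    · intro s t ⟨h1, h2⟩
      exact Arrow.hom_ext _ _ h1 h2
    · intro s t h
      exact ⟨Arrow.homMk s t h, rfl, rfl⟩
  have hF : ∀ k, ((cospan b₁ b₂).obj k).IsCardinalAccessible κ := by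
    rintro (_ | _ | _)
    · exact inferInstanceAs ((Arrow.rightFunc ⋙ coyoneda.obj (op f.left)).IsCardinalAccessible κ)
    · exact inferInstanceAs ((Arrow.leftFunc ⋙ coyoneda.obj (op f.left)).IsCardinalAccessible κ)
    · exact inferInstanceAs ((Arrow.rightFunc ⋙ coyoneda.obj (op f.right)).IsCardinalAccessible κ)
  exact Functor.isCardinalAccessible_of_isLimit hp.cone hp.isLimit κ
    (hasCardinalLT_of_finite _ _ (Cardinal.IsRegular.aleph0_le Fact.out))

end Presentable

section Embedding

open Opposite

variable {D : Type u₁} [Category.{v₁} D] {K : Type v₁} [SmallCategory K] (U : K ⥤ Arrow D)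

/-- The presheaf `k ↦ Hom((U k).right, f.left)`. -/
def diagPsh (f : Arrow D) : Kᵒᵖ ⥤ Type v₁ where
  obj k := ((U.obj k.unop).right ⟶ f.left)
  map r := ↾fun t => (U.map r.unop).right ≫ t
  map_id k := by
    ext t
    have h : ∀ t : (U.obj k.unop).right ⟶ f.left, (U.map (𝟙 k.unop)).right ≫ t = t := by
      intro t
      rw [U.map_id, Arrow.id_right, Category.id_comp]
    exact h t
  map_comp {k l m} r s := by
    ext t
    have h : ∀ t : (U.obj k.unop).right ⟶ f.left, (U.map (s.unop ≫ r.unop)).right ≫ t =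
        (U.map s.unop).right ≫ (U.map r.unop).right ≫ t := by
      intro t
      rw [U.map_comp, Arrow.comp_right, Category.assoc]
    exact h t

/-- The functor `f ↦ Hom((U -).right, f.left)`. -/
def diagF : Arrow D ⥤ (Kᵒᵖ ⥤ Type v₁) where
  obj f := diagPsh U f
  map {f g} t :=
    { app := fun k => ↾fun (x : (U.obj k.unop).right ⟶ f.left) => (x ≫ t.left :)
      naturality := fun k l r => by
        ext x
        exact Category.assoc _ _ _ }
  map_id f := by
    ext k x
    exact Category.comp_id _
  map_comp {f g h} s t := by
    ext k x
    exact (Category.assoc _ _ _).symm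

/-- The presheaf `k ↦ Hom(U k, f)`. -/
def sqPsh (f : Arrow D) : Kᵒᵖ ⥤ Type v₁ where
  obj k := (U.obj k.unop ⟶ f)
  map r := ↾fun t => U.map r.unop ≫ t
  map_id k := by
    refine ConcreteCategory.hom_ext _ _ fun t => ?_
    have h : ∀ t : U.obj k.unop ⟶ f, U.map (𝟙 k.unop) ≫ t = t := by
      intro t
      rw [U.map_id, Category.id_comp]
    exact h t
  map_comp {k l m} r s := by
    refine ConcreteCategory.hom_ext _ _ fun t => ?_
    have h : ∀ t : U.obj k.unop ⟶ f, U.map (s.unop ≫ r.unop) ≫ t =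
        U.map s.unop ≫ U.map r.unop ≫ t := by
      intro t
      rw [U.map_comp, Category.assoc]
    exact h t

/-- The auxiliary cocomplete category, of presheaves `F` with a map `F ⟶ diagF f`. -/
abbrev Aux := Comma (𝟭 (Kᵒᵖ ⥤ Type v₁)) (diagF U)

variable {U}

/-- The diagonal associated with an element of the presheaf. -/
def dg (Z : Aux U) (j : K) (x : Z.left.obj (op j)) : (U.obj j).right ⟶ Z.right.left :=
  Z.hom.app (op j) x

lemma dg_map (Z : Aux U) {i j : K} (r : i ⟶ j) (x : Z.left.obj (op j)) :
    dg Z i (Z.left.map r.op x) = (U.map r).right ≫ dg Z j x :=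
  ConcreteCategory.congr_hom (Z.hom.naturality r.op) x

lemma dg_hom {Z Z' : Aux U} (φ : Z ⟶ Z') (j : K) (x : Z.left.obj (op j)) :
    dg Z' j (φ.left.app (op j) x) = dg Z j x ≫ φ.right.left :=
  ConcreteCategory.congr_hom (NatTrans.congr_app φ.w (op j)) x

/-- The square associated with an element of the presheaf. -/
def sqOf (Z : Aux U) (j : K) (x : Z.left.obj (op j)) : U.obj j ⟶ Z.right :=
  Arrow.homMk ((U.obj j).hom ≫ dg Z j x) (dg Z j x ≫ Z.right.hom) (Category.assoc _ _ _)

lemma sqOf_map (Z : Aux U) {i j : K} (r : i ⟶ j) (x : Z.left.obj (op j)) :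
    sqOf Z i (Z.left.map r.op x) = U.map r ≫ sqOf Z j x := by
  apply Arrow.hom_ext
  · rw [Arrow.comp_left]
    change (U.obj i).hom ≫ dg Z i _ = (U.map r).left ≫ (U.obj j).hom ≫ dg Z j x
    rw [dg_map, ← Category.assoc, ← Category.assoc, Arrow.w]
  · rw [Arrow.comp_right]
    change dg Z i _ ≫ Z.right.hom = (U.map r).right ≫ dg Z j x ≫ Z.right.hom
    rw [dg_map, Category.assoc]

/-- The embedding of `RLP U` in the auxiliary category. -/
def emb : RLP U ⥤ Aux U where
  obj X :=
    { left := sqPsh U X.arr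
      right := X.arr
      hom :=
        { app := fun k => ↾fun (sq : U.obj k.unop ⟶ X.arr) => (X.str.lift k.unop sq :)
          naturality := fun k l r => by
            ext sq
            exact X.str.natural r.unop sq } }
  map {X Y} t :=
    { left :=
        { app := fun k => ↾fun (sq : U.obj k.unop ⟶ X.arr) => (sq ≫ t.1 :)
          naturality := fun k l r => by
            ext sq
            exact Category.assoc _ _ _ }
      right := t.1
      w := by
        ext k sq
        exact (t.2 k.unop sq).symm }
  map_id X := by
    apply CommaMorphism.ext
    · ext k sq
      exact Category.comp_id _
    · rfl
  map_comp s t := by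
    apply CommaMorphism.ext
    · ext k sq
      exact (Category.assoc _ _ _).symm
    · rfl

lemma sqOf_emb (X : RLP U) (j : K) (sq : U.obj j ⟶ X.arr) : sqOf (emb.obj X) j sq = sq :=
  Arrow.hom_ext _ _ (X.str.fac_left j sq) (X.str.fac_right j sq)

lemma sqOf_hom {Z Z' : Aux U} (φ : Z ⟶ Z') (j : K) (x : Z.left.obj (op j)) :
    sqOf Z' j (φ.left.app (op j) x) = sqOf Z j x ≫ φ.right := by
  apply Arrow.hom_ext
  · rw [Arrow.comp_left]
    change (U.obj j).hom ≫ dg Z' j _ = ((U.obj j).hom ≫ dg Z j x) ≫ _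
    rw [dg_hom, Category.assoc]
  · rw [Arrow.comp_right]
    change dg Z' j _ ≫ Z'.right.hom = (dg Z j x ≫ Z.right.hom) ≫ _
    rw [dg_hom, Category.assoc, Category.assoc, Arrow.w]

instance : (emb (U := U)).Faithful where
  map_injective h := Subtype.ext (congrArg CommaMorphism.right h)

instance : (emb (U := U)).Full where
  map_surjective {X Y} φ := by
    have key : ∀ (j : K) (sq : U.obj j ⟶ X.arr), φ.left.app (op j) sq = sq ≫ φ.right := by
      intro j sq
      have h := sqOf_hom φ j sq
      have h1 := sqOf_emb X j sq
      have h2 := sqOf_emb Y j (φ.left.app (op j) sq)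
      exact h2.symm.trans (h.trans (congrArg (· ≫ φ.right) h1))
    refine ⟨⟨φ.right, fun j sq => ?_⟩, ?_⟩
    · have h := dg_hom φ j sq
      exact h.symm.trans (congrArg (Y.str.lift j) (key j sq))
    · apply CommaMorphism.ext
      · ext k sq
        exact (key k.unop sq).symm
      · rfl

/-- The left adjoint to the projection. -/
noncomputable def botF : Arrow D ⥤ Aux U where
  obj f := { left := ⊥_ _, right := f, hom := initial.to _ }
  map t := { left := 𝟙 _, right := t, w := initial.hom_ext _ _ }
  map_id f := CommaMorphism.ext rfl rfl
  map_comp s t := CommaMorphism.ext (initial.hom_ext _ _) rfl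

/-- The adjunction with the projection. -/
noncomputable def botAdj : botF ⊣ Comma.snd (𝟭 (Kᵒᵖ ⥤ Type v₁)) (diagF U) :=
  Adjunction.mkOfHomEquiv
    { homEquiv := fun f Z =>
        { toFun := fun φ => φ.right
          invFun := fun t => { left := initial.to _, right := t, w := initial.hom_ext _ _ }
          left_inv := fun φ => CommaMorphism.ext (initial.hom_ext _ _) rfl
          right_inv := fun t => rfl }
      homEquiv_naturality_left_symm := fun s t => CommaMorphism.ext (initial.hom_ext _ _) rfl
      homEquiv_naturality_right := fun s t => rfl }

variable (U) in
/-- The object of the auxiliary category representing `Z ↦ Z.left.obj (op j)`. -/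
def tgt (j : K) : Aux U where
  left := yoneda.obj j
  right := Arrow.mk (𝟙 (U.obj j).right)
  hom :=
    { app := fun k => ↾fun (r : k.unop ⟶ j) => ((U.map r).right :)
      naturality := fun k l r => by
        ext s
        have h : ∀ s : k.unop ⟶ j, (U.map (r.unop ≫ s)).right =
            (U.map r.unop).right ≫ (U.map s).right := by
          intro s
          rw [U.map_comp, Arrow.comp_right]
        exact h s }

lemma dg_tgt (j : K) {i : K} (r : i ⟶ j) : dg (tgt U j) i r = (U.map r).right := rfl

lemma dg_tgt_id (j : K) : dg (tgt U j) j (𝟙 j) = 𝟙 _ := by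
  rw [dg_tgt, U.map_id, Arrow.id_right]

/-- Maps out of `tgt`. -/
def tgtDesc {j : K} {Z : Aux U} (x : Z.left.obj (op j)) : tgt U j ⟶ Z where
  left := yonedaEquiv.symm x
  right := Arrow.homMk (dg Z j x) (dg Z j x ≫ Z.right.hom) (Category.id_comp _).symm
  w := by
    ext k r
    exact dg_map Z r x

lemma tgt_right {j : K} {Z : Aux U} (φ : tgt U j ⟶ Z) :
    φ.right.left = dg Z j (φ.left.app (op j) (𝟙 j)) := by
  rw [dg_hom φ j (𝟙 j), dg_tgt_id]
  exact (Category.id_comp _).symm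

/-- Maps out of `tgt`. -/
def tgtEquiv (j : K) (Z : Aux U) : (tgt U j ⟶ Z) ≃ Z.left.obj (op j) where
  toFun φ := φ.left.app (op j) (𝟙 j)
  invFun x := tgtDesc x
  left_inv φ := by
    apply CommaMorphism.ext
    · exact yonedaEquiv.symm_apply_apply φ.left
    · apply Arrow.hom_ext
      · exact (tgt_right φ).symm
      · have h := Arrow.w φ.right
        have h' : φ.right.left ≫ Z.right.hom = φ.right.right := h.trans (Category.id_comp _)
        rw [tgt_right] at h'
        exact h'
  right_inv x := yonedaEquiv.apply_symm_apply x

variable (U) in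
/-- The comparison maps. -/
noncomputable def wmap (j : K) : botF.obj (U.obj j) ⟶ tgt U j where
  left := initial.to _
  right := Arrow.homMk (U.obj j).hom (𝟙 _) rfl
  w := initial.hom_ext _ _

lemma wmap_comp {j : K} {Z : Aux U} (φ : tgt U j ⟶ Z) :
    botAdj.homEquiv _ _ (wmap U j ≫ φ) = sqOf Z j (tgtEquiv j Z φ) := by
  have h0 : botAdj.homEquiv _ _ (wmap U j ≫ φ) = (wmap U j).right ≫ φ.right := by
    unfold botAdj
    rw [Adjunction.mkOfHomEquiv_homEquiv]
    rfl
  rw [h0]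
  apply Arrow.hom_ext
  · exact congrArg (fun t => (U.obj j).hom ≫ t) (tgt_right φ)
  · have h : φ.right.left ≫ Z.right.hom = φ.right.right :=
      (Arrow.w φ.right).trans (Category.id_comp _)
    rw [tgt_right] at h
    exact (Category.id_comp _).trans h.symm

variable (U) in
/-- The morphisms against which we take orthogonal objects. -/
noncomputable def W : MorphismProperty (Aux U) := .ofHoms (wmap U)

lemma isLocal_iff (Z : Aux U) : (W U).isLocal Z ↔ ∀ j, Function.Bijective (sqOf Z j) := by
  have h : ∀ j, Function.Bijective (fun g : tgt U j ⟶ Z => wmap U j ≫ g) ↔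
      Function.Bijective (sqOf Z j) := by
    intro j
    have : sqOf Z j ∘ tgtEquiv j Z =
        botAdj.homEquiv (U.obj j) Z ∘ (fun g : tgt U j ⟶ Z => wmap U j ≫ g) :=
      funext fun φ => (wmap_comp φ).symm
    rw [← (botAdj.homEquiv (U.obj j) Z).comp_bijective, ← this, Equiv.bijective_comp]
  constructor
  · intro hZ j
    exact (h j).1 (hZ (wmap U j) ⟨j⟩)
  · rintro hZ _ _ _ ⟨j⟩
    exact (h j).2 (hZ j)

lemma isLocal_emb (X : RLP U) : (W U).isLocal (emb.obj X) := by
  rw [isLocal_iff]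
  intro j
  have : sqOf (emb.obj X) j = id := funext (sqOf_emb X j)
  rw [this]
  exact Function.bijective_id

/-- The object of `RLP U` associated with a local object. -/
noncomputable def ofLocal (Z : Aux U) (hZ : ∀ j, Function.Bijective (sqOf Z j)) : RLP U where
  arr := Z.right
  str :=
    { lift := fun j sq => dg Z j ((Equiv.ofBijective _ (hZ j)).symm sq)
      fac_left := fun j sq =>
        congrArg (fun s => s.left) ((Equiv.ofBijective _ (hZ j)).apply_symm_apply sq)
      fac_right := fun j sq =>
        congrArg (fun s => s.right) ((Equiv.ofBijective _ (hZ j)).apply_symm_apply sq)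
      natural := fun {i j} r sq => by
        rw [← dg_map]
        congr 1
        rw [Equiv.symm_apply_eq]
        change _ = sqOf Z i _
        rw [sqOf_map]
        congr 1
        exact ((Equiv.ofBijective _ (hZ j)).apply_symm_apply sq).symm }

/-- Local objects are in the essential image. -/
noncomputable def ofLocalIso (Z : Aux U) (hZ : ∀ j, Function.Bijective (sqOf Z j)) :
    Z ≅ emb.obj (ofLocal Z hZ) :=
  Comma.isoMk
    (NatIso.ofComponents (fun k => (Equiv.ofBijective _ (hZ k.unop)).toIso) (fun {k l} r => by
      ext x
      exact sqOf_map Z r.unop x) : Z.left ≅ sqPsh U Z.right)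
    (Iso.refl _) (by
      ext k x
      have h : ∀ (j : K) (x : Z.left.obj (op j)),
          dg Z j ((Equiv.ofBijective _ (hZ j)).symm (sqOf Z j x)) = dg Z j x ≫ 𝟙 _ := by
        intro j x
        rw [Category.comp_id]
        exact congrArg (dg Z j) ((Equiv.ofBijective _ (hZ j)).symm_apply_apply x)
      exact h k.unop x)

/-- The embedding in the subcategory of local objects. -/
noncomputable def embLocal : RLP U ⥤ (W U).isLocal.FullSubcategory :=
  (W U).isLocal.lift emb isLocal_emb

instance : (embLocal (U := U)).Full := by unfold embLocal; infer_instance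
instance : (embLocal (U := U)).Faithful := by unfold embLocal; infer_instance
instance : (embLocal (U := U)).EssSurj where
  mem_essImage Z := by
    have h := (isLocal_iff Z.obj).1 Z.property
    exact ⟨ofLocal Z.obj h, ⟨((W U).isLocal.fullyFaithfulι.preimageIso
      (X := Z) (Y := embLocal.obj (ofLocal Z.obj h)) (ofLocalIso Z.obj h)).symm⟩⟩

lemma isCardinalPresentable_tgt (j : K) (κ : Cardinal.{v₁}) [Fact κ.IsRegular] [HasColimits D] :
    IsCardinalPresentable (tgt U j) κ := by
  have : ((Comma.fst (𝟭 (Kᵒᵖ ⥤ Type v₁)) (diagF U)) ⋙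
    (evaluation Kᵒᵖ (Type v₁)).obj (op j)).IsCardinalAccessible κ :=
    { preservesColimitOfShape := fun J _ _ => inferInstance }
  refine Functor.isCardinalAccessible_of_natIso (F := (Comma.fst (𝟭 (Kᵒᵖ ⥤ Type v₁)) (diagF U)) ⋙
    (evaluation Kᵒᵖ (Type v₁)).obj (op j)) ?_ κ
  exact (NatIso.ofComponents (fun Z => (tgtEquiv j Z).toIso) (fun {Z Z'} φ => by
    ext ψ
    rfl)).symm

lemma isRightAdjoint_forget (hD : LocallyPresentable D) : (forgetRLP U).IsRightAdjoint := by
  have : HasColimits D := hD.1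
  obtain ⟨κ, hκ, h⟩ := exists_presentable_family hD
    (fun s : K ⊕ K => Sum.elim (fun j => (U.obj j).left) (fun j => (U.obj j).right) s)
  have hsnd : (Comma.snd (𝟭 (Kᵒᵖ ⥤ Type v₁)) (diagF U)).IsCardinalAccessible κ :=
    { preservesColimitOfShape := fun J _ _ => inferInstance }
  have hι : (W U).isLocal.ι.IsRightAdjoint := by
    have : (W U).IsSmall := by unfold W; infer_instance
    refine MorphismProperty.isRightAdjoint_ι_isLocal (W U) κ ?_
    rintro _ _ _ ⟨j⟩
    refine ⟨?_, isCardinalPresentable_tgt j κ⟩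
    have h1 : IsCardinalPresentable (U.obj j).left κ := h (Sum.inl j)
    have h2 : IsCardinalPresentable (U.obj j).right κ := h (Sum.inr j)
    have := isCardinalPresentable_arrow (U.obj j) κ
    exact botAdj.isCardinalPresentable_leftAdjoint_obj κ (U.obj j)
  have he : (embLocal (U := U)).IsEquivalence := { }
  have hs : (Comma.snd (𝟭 (Kᵒᵖ ⥤ Type v₁)) (diagF U)).IsRightAdjoint := botAdj.isRightAdjoint
  exact inferInstanceAs
    ((embLocal ⋙ (W U).isLocal.ι) ⋙ Comma.snd (𝟭 (Kᵒᵖ ⥤ Type v₁)) (diagF U)).IsRightAdjoint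

end Embedding

end RLPAux

/-- If `C` is locally presentable and `J` is a small category, then the
forgetful functor `V : RLP(J,U) ⥤ Arrow C` admits a left adjoint, and is therefore
monadic. -/
theorem stmt11 {C : Type u₁} [Category.{v₁} C] (hC : LocallyPresentable C)
    {J : Type v₁} [SmallCategory J] (U : J ⥤ Arrow C) :
    (∃ F : Arrow C ⥤ RLP U, Nonempty (F ⊣ forgetRLP U)) ∧
    Nonempty (MonadicRightAdjoint (forgetRLP U)) := by
  have h := RLPAux.isRightAdjoint_forget (U := U) hC
  exact ⟨⟨_, ⟨Adjunction.ofIsRightAdjoint (forgetRLP U)⟩⟩,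
    RLPAux.nonempty_monadic (Adjunction.ofIsRightAdjoint (forgetRLP U))⟩
end
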